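/- Let D be a dictionary in a real Hilbert space X whose symmetric convex hull co(D) is compact. Then sup_{f ∈ co(D)} E_n(f,D) ≤ (n! V_n)^{1/n} / √n · ε_n(co(D)) for all n ≥ 1. -/

import Mathlib

open scoped RealInnerProductSpace

/-- Dyadic entropy number: infimum of all `ε > 0` such that `K` is covered by `2^n`
balls of radius `ε`. -/
noncomputable def entropyNumber {X : Type*} [NormedAddCommGroup X] (n : ℕ) (K : Set X) : ℝ :=
  sInf {ε : ℝ | 0 < ε ∧ ∃ c : Fin (2 ^ n) → X, K ⊆ ⋃ i, Metric.closedBall (c i) ε}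

/-- Symmetric (absolutely) convex hull: closure of the set of finite sums `∑ cᵢ gᵢ`
with `gᵢ ∈ K` and `∑ |cᵢ| ≤ 1`. -/
noncomputable def symConvexHull {X : Type*} [NormedAddCommGroup X] [NormedSpace ℝ X]
    (K : Set X) : Set X :=
  closure {x : X | ∃ (m : ℕ) (c : Fin m → ℝ) (g : Fin m → X),
    (∀ i, g i ∈ K) ∧ (∑ i, |c i|) ≤ 1 ∧ x = ∑ i, c i • g i}

/-- Volume of the unit Euclidean ball in `ℝⁿ`. -/
noncomputable def unitBallVol (n : ℕ) : ℝ :=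
  Real.pi ^ ((n : ℝ) / 2) / Real.Gamma ((n : ℝ) / 2 + 1)

/-- Span of the first `n` terms of a sequence. -/
noncomputable def spanFirst {X : Type*} [NormedAddCommGroup X] [NormedSpace ℝ X]
    (f : ℕ → X) (n : ℕ) : Submodule ℝ X :=
  Submodule.span ℝ (f '' {i | i < n})

/-- The weak greedy algorithm with parameter `γ`: `f n` (the `(n+1)`-st iterate) lies in `K`
and its distance to the span of the previous iterates is at least `γ` times that of any
other element of `K`. -/
def IsWeakGreedy {X : Type*} [NormedAddCommGroup X] [NormedSpace ℝ X]
    (γ : ℝ) (K : Set X) (f : ℕ → X) : Prop :=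
  ∀ n : ℕ, f n ∈ K ∧ ∀ g ∈ K,
    γ * Metric.infDist g (spanFirst f n : Set X) ≤ Metric.infDist (f n) (spanFirst f n : Set X)

/-- The greedy error `σ_n(K) = sup_{f ∈ K} dist(f, span{f_1,…,f_n})`. -/
noncomputable def greedyError {X : Type*} [NormedAddCommGroup X] [NormedSpace ℝ X]
    (K : Set X) (f : ℕ → X) (n : ℕ) : ℝ :=
  sSup ((fun g => Metric.infDist g (spanFirst f n : Set X)) '' K)

/-- Kolmogorov `n`-width. -/
noncomputable def kolmogorovWidth {X : Type*} [NormedAddCommGroup X] [NormedSpace ℝ X]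
    (n : ℕ) (K : Set X) : ℝ :=
  sInf {d : ℝ | ∃ Y : Submodule ℝ X, FiniteDimensional ℝ Y ∧ Module.finrank ℝ Y ≤ n ∧
    d = sSup ((fun g => Metric.infDist g (Y : Set X)) '' K)}

/-- `f` admits an `ℓ¹` representation over the dictionary `D`. -/
def HasL1Rep {X : Type*} [NormedAddCommGroup X] [NormedSpace ℝ X] (D : Set X) (f : X) : Prop :=
  ∃ (c : ℕ → ℝ) (g : ℕ → X), (∀ i, g i ∈ D) ∧ Summable (fun i => |c i|) ∧
    HasSum (fun i => c i • g i) f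

/-- The variation norm `‖f‖_{L₁(D)}`. -/
noncomputable def varNorm {X : Type*} [NormedAddCommGroup X] [NormedSpace ℝ X]
    (D : Set X) (f : X) : ℝ :=
  sInf {t : ℝ | ∃ (c : ℕ → ℝ) (g : ℕ → X), (∀ i, g i ∈ D) ∧ Summable (fun i => |c i|) ∧
    HasSum (fun i => c i • g i) f ∧ t = ∑' i, |c i|}

/-- The orthogonal greedy algorithm with target `f`: `fa 0 = 0`; at each step `g n ∈ D`
maximizes `|⟨g, f - fa n⟩|` over `D`, and `fa (n+1)` is the orthogonal projection of `f`
onto `span{g 0, …, g n}`. -/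
def IsOGA {X : Type*} [NormedAddCommGroup X] [InnerProductSpace ℝ X]
    (D : Set X) (f : X) (g fa : ℕ → X) : Prop :=
  fa 0 = 0 ∧ ∀ n : ℕ,
    g n ∈ D ∧ (∀ h ∈ D, |⟪h, f - fa n⟫| ≤ |⟪g n, f - fa n⟫|) ∧
    fa (n + 1) ∈ Submodule.span ℝ (g '' {i | i ≤ n}) ∧
    ∀ w ∈ Submodule.span ℝ (g '' {i | i ≤ n}), ⟪f - fa (n + 1), w⟫ = 0

/-- Best `n`-term approximation error `E_n(f, D)`. -/
noncomputable def bestNTermError {X : Type*} [NormedAddCommGroup X] [NormedSpace ℝ X]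
    (D : Set X) (n : ℕ) (f : X) : ℝ :=
  sInf {r : ℝ | ∃ (c : Fin n → ℝ) (g : Fin n → X), (∀ i, g i ∈ D) ∧ r = ‖f - ∑ i, c i • g i‖}

/-- The K-functional `K(t, g)` between `X` and `L₁(D)`. -/
noncomputable def Kfunctional {X : Type*} [NormedAddCommGroup X] [NormedSpace ℝ X]
    (D : Set X) (t : ℝ) (gg : X) : ℝ :=
  sInf {s : ℝ | ∃ h : X, HasL1Rep D h ∧ s = ‖gg - h‖ + t * varNorm D h}

/-- The interpolation norm `‖g‖_θ = sup_{t > 0} t^{-θ} K(t, g)`. -/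
noncomputable def interpNorm {X : Type*} [NormedAddCommGroup X] [NormedSpace ℝ X]
    (D : Set X) (θ : ℝ) (gg : X) : ℝ :=
  sSup ((fun t => t ^ (-θ) * Kfunctional D t gg) '' Set.Ioi (0 : ℝ))

/-!
Run the weak orthogonal greedy algorithm on `f ∈ co(D)`: it selects `g₀, g₁, … ∈ D`, and `rₖ` is
the component of `f` orthogonal to `span {g₀, …, gₖ₋₁}`. Write `dₖ` for the distance from `gₖ` to
that span. Since `f ∈ co(D)`, greediness gives `γ‖rₖ‖² ≤ |⟪gₖ, rₖ⟫|`, while projecting out one more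
vector gains `‖rₖ‖² - ‖rₖ₊₁‖² ≥ ⟪gₖ, rₖ⟫² / dₖ²`. Hence `‖rₖ‖⁻²` grows by at least `γ² / dₖ²`, and
the inequality of harmonic and geometric means yields `γ √n ‖rₙ‖ ≤ (d₀ ⋯ dₙ₋₁)^(1/n)`.

The product `d₀ ⋯ dₙ₋₁` is a determinant: `co(D)` contains the image of the `ℓ¹` ball under
`c ↦ ∑ cₖ gₖ`, whose `n`-dimensional volume is `d₀ ⋯ dₙ₋₁ · 2ⁿ / n!`. If `2ⁿ` balls of radius `ε`
cover it, this is at most `2ⁿ εⁿ Vₙ`. Finally let `γ → 1`.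
-/

open MeasureTheory InnerProductSpace

section Projection

variable {𝕜 E : Type*} [RCLike 𝕜] [NormedAddCommGroup E] [InnerProductSpace 𝕜 E]

section Nested

variable {U V : Submodule 𝕜 E} [U.HasOrthogonalProjection] [V.HasOrthogonalProjection]

lemma norm_starProjection_sub_starProjection_sq (hUV : U ≤ V) (x : E) :
    ‖V.starProjection x - U.starProjection x‖ ^ 2 =
      ‖V.starProjection x‖ ^ 2 - ‖U.starProjection x‖ ^ 2 := by
  have hcomp : U.starProjection (V.starProjection x) = U.starProjection x :=
    DFunLike.congr_fun (Submodule.starProjection_comp_starProjection_of_le hUV) x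
  have hpyth := Submodule.norm_sq_eq_add_norm_sq_starProjection (V.starProjection x) U
  rw [Submodule.starProjection_orthogonal_val, hcomp] at hpyth
  linarith

lemma norm_starProjection_le_norm_starProjection (hUV : U ≤ V) (x : E) :
    ‖U.starProjection x‖ ≤ ‖V.starProjection x‖ := by
  rw [← sq_le_sq₀ (norm_nonneg _) (norm_nonneg _), ← sub_nonneg,
    ← norm_starProjection_sub_starProjection_sq hUV]
  positivity

lemma norm_inner_starProjection_sq_le (hUV : U ≤ V) (x : E) {v : E} (hv : v ∈ Uᗮ) :
    ‖inner 𝕜 v (V.starProjection x)‖ ^ 2 ≤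
      ‖V.starProjection v‖ ^ 2 * (‖V.starProjection x‖ ^ 2 - ‖U.starProjection x‖ ^ 2) := by
  set d := V.starProjection x - U.starProjection x
  have hd : d ∈ V := sub_mem (V.starProjection_apply_mem x) (hUV (U.starProjection_apply_mem x))
  have hinner : inner 𝕜 v (V.starProjection x) = inner 𝕜 (V.starProjection v) d := by
    rw [Submodule.inner_starProjection_left_eq_right, Submodule.starProjection_eq_self_iff.mpr hd,
      inner_sub_right, Submodule.inner_left_of_mem_orthogonal (U.starProjection_apply_mem x) hv,
      sub_zero]
  rw [hinner, ← norm_starProjection_sub_starProjection_sq hUV, ← mul_pow]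
  gcongr
  exact norm_inner_le_norm _ _

end Nested

section GramSchmidt

variable {ι : Type*} [LinearOrder ι] [LocallyFiniteOrderBot ι] [WellFoundedLT ι]

lemma gramSchmidt_eq_starProjection_orthogonal (f : ι → E) (i : ι)
    [(Submodule.span 𝕜 (f '' Set.Iio i)).HasOrthogonalProjection] :
    gramSchmidt 𝕜 f i = (Submodule.span 𝕜 (f '' Set.Iio i))ᗮ.starProjection (f i) := by
  set U := Submodule.span 𝕜 (f '' Set.Iio i)
  have horth : gramSchmidt 𝕜 f i ∈ Uᗮ := by
    refine (Submodule.mem_orthogonal' _ _).mpr fun u hu => ?_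
    induction hu using Submodule.span_induction with
    | mem u hu =>
      obtain ⟨j, hj, rfl⟩ := hu
      exact gramSchmidt_inv_triangular 𝕜 f hj
    | zero => exact inner_zero_right _
    | add u v _ _ hu hv => rw [inner_add_right, hu, hv, add_zero]
    | smul c u _ hu => rw [inner_smul_right, hu, mul_zero]
  have hsub : f i - gramSchmidt 𝕜 f i ∈ U := by
    rw [gramSchmidt_def, sub_sub_cancel]
    refine Submodule.sum_mem _ fun j hj => ?_
    have hle : Submodule.span 𝕜 {gramSchmidt 𝕜 f j} ≤ U := by
      rw [Submodule.span_singleton_le_iff_mem]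
      exact Submodule.span_mono (Set.image_mono (Set.Iic_subset_Iio.mpr (Finset.mem_Iio.mp hj)))
        (gramSchmidt_mem_span 𝕜 f le_rfl)
    exact hle (Submodule.starProjection_apply_mem _ _)
  exact (Submodule.eq_starProjection_of_mem_orthogonal horth
    (U.le_orthogonal_orthogonal hsub)).symm

lemma inner_gramSchmidtNormed_self (f : ι → E) (i : ι) :
    inner 𝕜 (gramSchmidtNormed 𝕜 f i) (f i) = ‖gramSchmidt 𝕜 f i‖ := by
  have hself : inner 𝕜 (gramSchmidt 𝕜 f i) (f i) = (‖gramSchmidt 𝕜 f i‖ : 𝕜) ^ 2 := by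
    rw [gramSchmidt_def'' 𝕜 f i, inner_add_right, inner_sum, ← inner_self_eq_norm_sq_to_K,
      Finset.sum_eq_zero, add_zero]
    intro j hj
    rw [inner_smul_right, gramSchmidt_orthogonal 𝕜 f (Finset.mem_Iio.mp hj).ne', mul_zero]
  rw [gramSchmidtNormed, inner_smul_left, hself, RCLike.conj_inv, RCLike.conj_ofReal, sq,
    ← mul_assoc]
  exact inv_mul_mul_self (‖gramSchmidt 𝕜 f i‖ : 𝕜)

lemma inner_gramSchmidtNormed_eq_zero (f : ι → E) {i j : ι} (hij : i < j) :
    inner 𝕜 (gramSchmidtNormed 𝕜 f j) (f i) = 0 := by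
  rw [gramSchmidtNormed, inner_smul_left, gramSchmidt_inv_triangular 𝕜 f hij, mul_zero]

lemma det_inner_gramSchmidtNormed {κ : Type*} [Fintype κ] [LinearOrder κ] {φ : κ → ι}
    (hφ : StrictMono φ) (f : ι → E) :
    (Matrix.of fun i j => inner 𝕜 (gramSchmidtNormed 𝕜 f (φ i)) (f (φ j))).det =
      ∏ i, (‖gramSchmidt 𝕜 f (φ i)‖ : 𝕜) := by
  rw [Matrix.det_of_isUpperTriangular]
  · exact Finset.prod_congr rfl fun i _ => inner_gramSchmidtNormed_self f (φ i)
  · exact fun i j hij => inner_gramSchmidtNormed_eq_zero f (hφ hij)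

lemma orthonormal_gramSchmidtNormed_comp {κ : Type*} {φ : κ → ι} (hφ : φ.Injective) {f : ι → E}
    (hf : ∀ i, gramSchmidt 𝕜 f (φ i) ≠ 0) :
    Orthonormal 𝕜 fun i => gramSchmidtNormed 𝕜 f (φ i) := by
  have hne (i : κ) : gramSchmidtNormed 𝕜 f (φ i) ≠ 0 := by simpa [gramSchmidtNormed] using hf i
  exact (gramSchmidtNormed_orthonormal' f).comp (fun i => ⟨φ i, hne i⟩) fun i j hij =>
    hφ (Subtype.ext_iff.mp hij)

end GramSchmidt

lemma norm_toLp_inner_le_of_orthonormal {ι : Type*} [Fintype ι] {e : ι → E} (he : Orthonormal 𝕜 e)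
    (x : E) : ‖WithLp.toLp 2 fun i => inner 𝕜 (e i) x‖ ≤ ‖x‖ := by
  rw [← sq_le_sq₀ (norm_nonneg _) (norm_nonneg _), EuclideanSpace.norm_sq_eq]
  exact he.sum_inner_products_le x

end Projection

section Volume

lemma volume_sum_abs_le_one (ι : Type*) [Fintype ι] [Nonempty ι] :
    volume {x : ι → ℝ | ∑ i, |x i| ≤ 1} =
      ENNReal.ofReal (2 ^ Fintype.card ι / (Fintype.card ι).factorial) := by
  have hgamma : Real.Gamma (1 + 1) = 1 := by simpa using Real.Gamma_nat_eq_factorial 1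
  simpa [hgamma, Real.Gamma_nat_eq_factorial] using volume_sum_rpow_le ι le_rfl 1

lemma unitBallVol_pos (n : ℕ) : 0 < unitBallVol n :=
  div_pos (Real.rpow_pos_of_pos Real.pi_pos _) (Real.Gamma_pos_of_pos (by positivity))

lemma volume_closedBall_eq_pow_mul_unitBallVol {ι : Type*} [Fintype ι] [Nonempty ι]
    (x : EuclideanSpace ℝ ι) {r : ℝ} (hr : 0 ≤ r) :
    volume (Metric.closedBall x r) =
      ENNReal.ofReal (r ^ Fintype.card ι * unitBallVol (Fintype.card ι)) := by
  rw [EuclideanSpace.volume_closedBall, ENNReal.ofReal_mul (by positivity), ENNReal.ofReal_pow hr,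
    unitBallVol, Real.sqrt_eq_rpow, ← Real.rpow_mul_natCast Real.pi_pos.le, one_div_mul_eq_div]

variable {X : Type*} [NormedAddCommGroup X] [InnerProductSpace ℝ X]
  {κ : Type*} [Fintype κ] {p : κ → X} {ε : ℝ}

lemma abs_det_inner_mul_le_of_subset_iUnion_closedBall {ι : Type*} [Fintype ι] [Nonempty ι]
    [DecidableEq ι] {e : ι → X} (he : Orthonormal ℝ e) (g : ι → X) (hε : 0 ≤ ε)
    (hp : (fun c : ι → ℝ => ∑ i, c i • g i) '' {c | ∑ i, |c i| ≤ 1} ⊆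
      ⋃ k, Metric.closedBall (p k) ε) :
    |(Matrix.of fun i j => ⟪e i, g j⟫).det| *
        (2 ^ Fintype.card ι / (Fintype.card ι).factorial) ≤
      Fintype.card κ * (ε ^ Fintype.card ι * unitBallVol (Fintype.card ι)) := by
  set A : Matrix ι ι ℝ := Matrix.of fun i j => ⟪e i, g j⟫
  let T : X → EuclideanSpace ℝ ι := fun x => WithLp.toLp 2 fun i => ⟪e i, x⟫
  have hTdist (x y : X) : dist (T x) (T y) ≤ dist x y := by
    have hsub : T x - T y = T (x - y) := by ext i; simp [T, inner_sub_right]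
    rw [dist_eq_norm, dist_eq_norm, hsub]
    exact norm_toLp_inner_le_of_orthonormal he _
  have hTsum (c : ι → ℝ) : T (∑ i, c i • g i) = WithLp.toLp 2 (A.toLin' c) := by
    ext i
    simp [T, A, Matrix.mulVec, dotProduct, inner_sum, inner_smul_right, mul_comm]
  have hcover : A.toLin' '' {c | ∑ i, |c i| ≤ 1} ⊆
      ⋃ k, WithLp.toLp 2 ⁻¹' Metric.closedBall (T (p k)) ε := by
    rintro _ ⟨c, hc, rfl⟩
    obtain ⟨k, hk⟩ := Set.mem_iUnion.mp (hp ⟨c, hc, rfl⟩)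
    refine Set.mem_iUnion.mpr ⟨k, ?_⟩
    rw [Set.mem_preimage, ← hTsum]
    exact (hTdist _ _).trans hk
  have hvol := (measure_mono hcover).trans (measure_iUnion_fintype_le volume _)
  simp only [(PiLp.volume_preserving_toLp ι).measure_preimage
    Metric.isClosed_closedBall.measurableSet.nullMeasurableSet,
    volume_closedBall_eq_pow_mul_unitBallVol _ hε, Measure.addHaar_image_linearMap,
    LinearMap.det_toLin', volume_sum_abs_le_one, Finset.sum_const, Finset.card_univ] at hvol
  rwa [← ENNReal.ofReal_mul (abs_nonneg _), ← ENNReal.ofReal_nsmul, nsmul_eq_mul,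
    ENNReal.ofReal_le_ofReal_iff (by have := unitBallVol_pos (Fintype.card ι); positivity)] at hvol

lemma prod_norm_gramSchmidt_mul_le_of_subset_iUnion_closedBall {n : ℕ} (hn : n ≠ 0) (g : ℕ → X)
    (hε : 0 ≤ ε) (hp : (fun c : Fin n → ℝ => ∑ i, c i • g i) '' {c | ∑ i, |c i| ≤ 1} ⊆
      ⋃ k, Metric.closedBall (p k) ε) :
    (∏ k ∈ Finset.range n, ‖gramSchmidt ℝ g k‖) * (2 ^ n / n.factorial) ≤
      Fintype.card κ * (ε ^ n * unitBallVol n) := by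
  have : NeZero n := ⟨hn⟩
  rw [← Fin.prod_univ_eq_prod_range fun k => ‖gramSchmidt ℝ g k‖]
  by_cases hg : ∀ i : Fin n, gramSchmidt ℝ g i ≠ 0
  · have h := abs_det_inner_mul_le_of_subset_iUnion_closedBall
      (orthonormal_gramSchmidtNormed_comp Fin.val_injective hg) (fun i => g i) hε hp
    rw [det_inner_gramSchmidtNormed Fin.val_strictMono, Fintype.card_fin] at h
    exact (mul_le_mul_of_nonneg_right (le_abs_self _) (by positivity)).trans h
  · push Not at hg
    obtain ⟨i, hi⟩ := hg
    have := unitBallVol_pos n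
    rw [Finset.prod_eq_zero (Finset.mem_univ i) (by rw [hi, norm_zero]), zero_mul]
    positivity

end Volume

section Recurrence

lemma div_le_inv_sub_inv_of_mul_sq_le {a a' b c : ℝ} (ha' : 0 < a') (haa' : a' ≤ a) (hb : 0 < b)
    (h : c * a ^ 2 ≤ b * (a - a')) : c / b ≤ a'⁻¹ - a⁻¹ := by
  have ha : 0 < a := ha'.trans_le haa'
  calc c / b ≤ (a - a') / a ^ 2 := by rwa [div_le_div_iff₀ hb (by positivity), mul_comm (a - a')]
    _ ≤ (a - a') / (a' * a) := by
      rw [sq]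
      have := sub_nonneg.mpr haa'
      gcongr
    _ = a'⁻¹ - a⁻¹ := by field_simp

lemma mul_mul_le_prod_rpow_of_mul_sq_le {a b : ℕ → ℝ} {c : ℝ} (hc : 0 < c) (ha : ∀ k, 0 ≤ a k)
    (ha_anti : Antitone a) (hb : ∀ k, 0 ≤ b k)
    (h : ∀ k, c * a k ^ 2 ≤ b k * (a k - a (k + 1))) (n : ℕ) :
    c * n * a n ≤ (∏ k ∈ Finset.range n, b k) ^ (n : ℝ)⁻¹ := by
  rcases n.eq_zero_or_pos with rfl | hn
  · simp
  rcases (ha n).eq_or_lt' with han | han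
  · rw [han, mul_zero]
    exact Real.rpow_nonneg (Finset.prod_nonneg fun k _ => hb k) _
  have ha_pos {k : ℕ} (hk : k ≤ n) : 0 < a k := han.trans_le (ha_anti hk)
  have hb_pos {k : ℕ} (hk : k < n) : 0 < b k := by
    refine (hb k).lt_of_ne' fun hbk => ?_
    have := ha_pos hk.le
    exact (h k).not_gt (by rw [hbk, zero_mul]; positivity)
  have hsum : c * ∑ k ∈ Finset.range n, 1 / b k ≤ (a n)⁻¹ :=
    calc c * ∑ k ∈ Finset.range n, 1 / b k = ∑ k ∈ Finset.range n, c / b k := by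
          simp only [Finset.mul_sum, mul_one_div]
      _ ≤ ∑ k ∈ Finset.range n, ((a (k + 1))⁻¹ - (a k)⁻¹) := by
          refine Finset.sum_le_sum fun k hk => ?_
          have hk := Finset.mem_range.mp hk
          exact div_le_inv_sub_inv_of_mul_sq_le (ha_pos hk) (ha_anti k.le_succ) (hb_pos hk) (h k)
      _ = (a n)⁻¹ - (a 0)⁻¹ := Finset.sum_range_sub (fun k => (a k)⁻¹) n
      _ ≤ (a n)⁻¹ := sub_le_self _ (inv_nonneg.mpr (ha 0))
  have hne : (Finset.range n).Nonempty := Finset.nonempty_range_iff.mpr hn.ne'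
  have hS : 0 < ∑ k ∈ Finset.range n, 1 / b k :=
    Finset.sum_pos (fun k hk => one_div_pos.mpr (hb_pos (Finset.mem_range.mp hk))) hne
  have hmean : n / ∑ k ∈ Finset.range n, 1 / b k ≤ (∏ k ∈ Finset.range n, b k) ^ (n : ℝ)⁻¹ := by
    simpa using Real.harm_mean_le_geom_mean (Finset.range n) hne (fun _ => 1) b
      (fun _ _ => one_pos) (by simpa using hn) fun k hk => hb_pos (Finset.mem_range.mp hk)
  refine le_trans ?_ hmean
  rw [le_div_iff₀ hS]
  calc c * n * a n * ∑ k ∈ Finset.range n, 1 / b k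
      = n * (a n * (c * ∑ k ∈ Finset.range n, 1 / b k)) := by ring
    _ ≤ n * (a n * (a n)⁻¹) := by gcongr
    _ = n := by rw [mul_inv_cancel₀ han.ne', mul_one]

end Recurrence

section Greedy

variable {X : Type*} [NormedAddCommGroup X] [InnerProductSpace ℝ X]

instance finiteDimensional_spanFirst (g : ℕ → X) (n : ℕ) : FiniteDimensional ℝ (spanFirst g n) :=
  FiniteDimensional.span_of_finite ℝ ((Set.finite_lt_nat n).image g)

lemma spanFirst_mono (g : ℕ → X) : Monotone (spanFirst g) := fun _ _ hmn =>
  Submodule.span_mono (Set.image_mono fun _ hi => lt_of_lt_of_le hi hmn)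

lemma spanFirst_succ (g : ℕ → X) (n : ℕ) :
    spanFirst g (n + 1) = spanFirst g n ⊔ Submodule.span ℝ {g n} := by
  have hset : {i | i < n + 1} = insert n {i | i < n} := by
    ext i
    simp only [Set.mem_ofPred_eq, Set.mem_insert_iff, Nat.lt_succ_iff_lt_or_eq, or_comm]
  rw [spanFirst, spanFirst, hset, Set.image_insert_eq, Submodule.span_insert, sup_comm]

lemma mem_spanFirst_iff_exists_fun {g : ℕ → X} {n : ℕ} {x : X} :
    x ∈ spanFirst g n ↔ ∃ c : Fin n → ℝ, ∑ i, c i • g i = x := by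
  have hset : g '' {i | i < n} = Set.range fun i : Fin n => g i := by
    rw [← Function.comp_def g, Set.range_comp, Fin.range_val]
    rfl
  rw [spanFirst, hset, Submodule.mem_span_range_iff_exists_fun]

lemma exists_forall_spanFirst {P : Submodule ℝ X → X → Prop}
    (hP : ∀ U : Submodule ℝ X, FiniteDimensional ℝ U → ∃ x, P U x) :
    ∃ g : ℕ → X, ∀ n, P (spanFirst g n) (g n) := by
  let pick : Submodule ℝ X → X := fun U => Classical.epsilon (P U)
  let U : ℕ → Submodule ℝ X := fun n => Nat.rec ⊥ (fun _ V => V ⊔ Submodule.span ℝ {pick V}) n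
  have hU (n : ℕ) : spanFirst (fun k => pick (U k)) n = U n := by
    induction n with
    | zero => simp [spanFirst, U]
    | succ n ih => rw [spanFirst_succ, ih]
  refine ⟨fun k => pick (U k), fun n => ?_⟩
  rw [hU n]
  exact Classical.epsilon_spec (hP (U n) (hU n ▸ inferInstance))

/-- The component of `f` orthogonal to the first `n` terms of `g`: the residual of the orthogonal
greedy algorithm after `n` steps. -/
noncomputable def spanResidual (g : ℕ → X) (n : ℕ) (f : X) : X :=
  (spanFirst g n)ᗮ.starProjection f

lemma spanResidual_self_eq_gramSchmidt (g : ℕ → X) (n : ℕ) :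
    spanResidual g n (g n) = gramSchmidt ℝ g n :=
  have : FiniteDimensional ℝ (Submodule.span ℝ (g '' Set.Iio n)) := finiteDimensional_spanFirst g n
  (gramSchmidt_eq_starProjection_orthogonal g n).symm

lemma antitone_norm_spanResidual (g : ℕ → X) (f : X) : Antitone fun n => ‖spanResidual g n f‖ :=
  fun _ _ hmn => norm_starProjection_le_norm_starProjection
    (Submodule.orthogonal_le (spanFirst_mono g hmn)) f

lemma inner_spanResidual_sq_le (g : ℕ → X) (n : ℕ) (f : X) :
    ⟪g n, spanResidual g n f⟫ ^ 2 ≤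
      ‖gramSchmidt ℝ g n‖ ^ 2 * (‖spanResidual g n f‖ ^ 2 - ‖spanResidual g (n + 1) f‖ ^ 2) := by
  have hgn : g n ∈ (spanFirst g (n + 1))ᗮᗮ :=
    Submodule.le_orthogonal_orthogonal _ (Submodule.subset_span ⟨n, n.lt_succ_self, rfl⟩)
  rw [← spanResidual_self_eq_gramSchmidt, ← sq_abs]
  exact norm_inner_starProjection_sq_le (Submodule.orthogonal_le (spanFirst_mono g n.le_succ)) f hgn

lemma inner_spanResidual_self (g : ℕ → X) (n : ℕ) (f : X) :
    ⟪spanResidual g n f, f⟫ = ‖spanResidual g n f‖ ^ 2 :=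
  Submodule.re_inner_starProjection_eq_normSq (𝕜 := ℝ) (spanFirst g n)ᗮ f

/-- `g` is a sequence of selections of the weak orthogonal greedy algorithm for `f` over the
dictionary `D`: each `g n` maximizes, up to the factor `γ`, the correlation with the residual of
`f` after the first `n` steps. -/
def IsWeakOrthogonalGreedy (γ : ℝ) (D : Set X) (f : X) (g : ℕ → X) : Prop :=
  ∀ n, g n ∈ D ∧ ∀ h ∈ D, γ * |⟪h, spanResidual g n f⟫| ≤ |⟪g n, spanResidual g n f⟫|

lemma exists_mem_forall_mul_le {α : Type*} {s : Set α} (hs : s.Nonempty) {F : α → ℝ}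
    (hF : BddAbove (F '' s)) (hF_nonneg : ∀ x ∈ s, 0 ≤ F x) {γ : ℝ} (hγ0 : 0 ≤ γ) (hγ1 : γ < 1) :
    ∃ x ∈ s, ∀ y ∈ s, γ * F y ≤ F x := by
  have hle {y : α} (hy : y ∈ s) : F y ≤ sSup (F '' s) := le_csSup hF ⟨y, hy, rfl⟩
  rcases (Real.sSup_nonneg (Set.forall_mem_image.mpr hF_nonneg)).eq_or_lt' with hM | hM
  · obtain ⟨x, hx⟩ := hs
    refine ⟨x, hx, fun y hy => ?_⟩
    exact (mul_nonpos_of_nonneg_of_nonpos hγ0 ((hle hy).trans_eq hM)).trans (hF_nonneg x hx)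
  · obtain ⟨_, ⟨x, hx, rfl⟩, hlt⟩ :=
      exists_lt_of_lt_csSup (hs.image F) (mul_lt_of_lt_one_left hM hγ1)
    exact ⟨x, hx, fun y hy => (mul_le_mul_of_nonneg_left (hle hy) hγ0).trans hlt.le⟩

lemma exists_isWeakOrthogonalGreedy {D : Set X} (hD : D.Nonempty) (hDb : Bornology.IsBounded D)
    {γ : ℝ} (hγ0 : 0 ≤ γ) (hγ1 : γ < 1) (f : X) : ∃ g, IsWeakOrthogonalGreedy γ D f g := by
  have hbdd (r : X) : BddAbove ((fun h => |⟪h, r⟫|) '' D) := by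
    obtain ⟨C, hC⟩ := hDb.exists_norm_le
    refine ⟨C * ‖r‖, Set.forall_mem_image.mpr fun h hh => ?_⟩
    exact (abs_real_inner_le_norm h r).trans (by gcongr; exact hC h hh)
  obtain ⟨g, hg⟩ := exists_forall_spanFirst (P := fun U x => x ∈ D ∧ ∀ [U.HasOrthogonalProjection],
    ∀ h ∈ D, γ * |⟪h, Uᗮ.starProjection f⟫| ≤ |⟪x, Uᗮ.starProjection f⟫|) fun U _ => by
      obtain ⟨x, hx, hmax⟩ := exists_mem_forall_mul_le hD (hbdd (Uᗮ.starProjection f))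
        (fun _ _ => abs_nonneg _) hγ0 hγ1
      exact ⟨x, hx, hmax⟩
  exact ⟨g, fun n => ⟨(hg n).1, (hg n).2⟩⟩

end Greedy

section Dictionary

variable {X : Type*} [NormedAddCommGroup X] [InnerProductSpace ℝ X] {D : Set X}

lemma sum_smul_mem_symConvexHull {m : ℕ} {c : Fin m → ℝ} {g : Fin m → X}
    (hg : ∀ i, g i ∈ D) (hc : ∑ i, |c i| ≤ 1) : ∑ i, c i • g i ∈ symConvexHull D :=
  subset_closure ⟨m, c, g, hg, hc, rfl⟩

lemma subset_symConvexHull (D : Set X) : D ⊆ symConvexHull D := fun x hx => by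
  simpa using sum_smul_mem_symConvexHull (m := 1) (c := 1) (g := fun _ => x) (fun _ => hx) (by simp)

lemma inner_le_of_mem_symConvexHull {r f : X} {b : ℝ} (hb : 0 ≤ b)
    (hD : ∀ g ∈ D, |⟪r, g⟫| ≤ b) (hf : f ∈ symConvexHull D) : ⟪r, f⟫ ≤ b := by
  have hclosed : IsClosed {x : X | ⟪r, x⟫ ≤ b} := isClosed_le (by fun_prop) continuous_const
  refine closure_minimal ?_ hclosed hf
  rintro _ ⟨m, c, g, hg, hc, rfl⟩
  calc ⟪r, ∑ i, c i • g i⟫ = ∑ i, c i * ⟪r, g i⟫ := by simp only [inner_sum, inner_smul_right]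
    _ ≤ ∑ i, |c i| * b := by
      refine Finset.sum_le_sum fun i _ => (le_abs_self _).trans ?_
      rw [abs_mul]
      gcongr
      exact hD _ (hg i)
    _ = (∑ i, |c i|) * b := (Finset.sum_mul _ _ _).symm
    _ ≤ b := mul_le_of_le_one_left hb hc

lemma bestNTermError_le_norm_spanResidual {n : ℕ} {g : ℕ → X} (hg : ∀ k, g k ∈ D) (f : X) :
    bestNTermError D n f ≤ ‖spanResidual g n f‖ := by
  obtain ⟨c, hc⟩ :=
    mem_spanFirst_iff_exists_fun.mp (Submodule.starProjection_apply_mem (spanFirst g n) f)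
  refine csInf_le ⟨0, ?_⟩ ⟨c, fun i => g i, fun i => hg i, ?_⟩
  · rintro _ ⟨c, g, -, rfl⟩
    exact norm_nonneg _
  · rw [spanResidual, Submodule.starProjection_orthogonal_val, hc]

lemma bestNTermError_empty {n : ℕ} (hn : n ≠ 0) (f : X) : bestNTermError ∅ n f = 0 := by
  have : NeZero n := ⟨hn⟩
  simp [bestNTermError]

namespace IsWeakOrthogonalGreedy

variable {γ : ℝ} {f : X} {g : ℕ → X}

lemma mul_norm_spanResidual_sq_le (hg : IsWeakOrthogonalGreedy γ D f g) (hγ : 0 < γ)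
    (hf : f ∈ symConvexHull D) (n : ℕ) :
    γ * ‖spanResidual g n f‖ ^ 2 ≤ |⟪g n, spanResidual g n f⟫| := by
  rw [← le_div_iff₀' hγ, ← inner_spanResidual_self]
  refine inner_le_of_mem_symConvexHull (by positivity) (fun h hh => ?_) hf
  rw [real_inner_comm, le_div_iff₀' hγ]
  exact (hg n).2 h hh

lemma mul_sqrt_mul_norm_spanResidual_le (hg : IsWeakOrthogonalGreedy γ D f g) (hγ : 0 < γ)
    (hf : f ∈ symConvexHull D) (n : ℕ) :
    γ * √n * ‖spanResidual g n f‖ ≤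
      (∏ k ∈ Finset.range n, ‖gramSchmidt ℝ g k‖) ^ (n : ℝ)⁻¹ := by
  have hrec (k : ℕ) : γ ^ 2 * (‖spanResidual g k f‖ ^ 2) ^ 2 ≤
      ‖gramSchmidt ℝ g k‖ ^ 2 *
        (‖spanResidual g k f‖ ^ 2 - ‖spanResidual g (k + 1) f‖ ^ 2) := by
    refine le_trans ?_ (inner_spanResidual_sq_le g k f)
    rw [← mul_pow, ← sq_abs ⟪g k, spanResidual g k f⟫]
    exact pow_le_pow_left₀ (by positivity) (hg.mul_norm_spanResidual_sq_le hγ hf k) 2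
  have hanti : Antitone fun k => ‖spanResidual g k f‖ ^ 2 := fun i j hij =>
    pow_le_pow_left₀ (norm_nonneg _) (antitone_norm_spanResidual g f hij) 2
  have hbound := mul_mul_le_prod_rpow_of_mul_sq_le (by positivity) (fun k => sq_nonneg _) hanti
    (fun k => sq_nonneg _) hrec n
  rw [Finset.prod_pow, ← Real.rpow_pow_comm (by positivity)] at hbound
  refine (sq_le_sq₀ (by positivity) (by positivity)).mp ?_
  rwa [mul_pow, mul_pow, Real.sq_sqrt n.cast_nonneg]

end IsWeakOrthogonalGreedy

variable {n : ℕ} {ε : ℝ} {p : Fin (2 ^ n) → X}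

lemma prod_norm_gramSchmidt_le_of_symConvexHull_subset (hn : n ≠ 0) (hε : 0 ≤ ε)
    (hp : symConvexHull D ⊆ ⋃ i, Metric.closedBall (p i) ε) {g : ℕ → X} (hg : ∀ k, g k ∈ D) :
    ∏ k ∈ Finset.range n, ‖gramSchmidt ℝ g k‖ ≤ n.factorial * unitBallVol n * ε ^ n := by
  have hhull : (fun c : Fin n → ℝ => ∑ i, c i • g i) '' {c | ∑ i, |c i| ≤ 1} ⊆ symConvexHull D :=
    Set.image_subset_iff.mpr fun c hc => sum_smul_mem_symConvexHull (fun i => hg i) hc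
  have h := prod_norm_gramSchmidt_mul_le_of_subset_iUnion_closedBall hn g hε (hhull.trans hp)
  rw [Fintype.card_fin, Nat.cast_pow, Nat.cast_ofNat, mul_div_assoc',
    div_le_iff₀ (by positivity)] at h
  refine le_of_mul_le_mul_right (h.trans_eq ?_) (by positivity : (0 : ℝ) < 2 ^ n)
  ring

lemma bestNTermError_le_of_symConvexHull_subset (hD : Bornology.IsBounded D) (hn : n ≠ 0)
    (hε : 0 ≤ ε) (hp : symConvexHull D ⊆ ⋃ i, Metric.closedBall (p i) ε) {f : X}
    (hf : f ∈ symConvexHull D) :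
    bestNTermError D n f ≤ (n.factorial * unitBallVol n) ^ (n : ℝ)⁻¹ / √n * ε := by
  have hV := unitBallVol_pos n
  rcases D.eq_empty_or_nonempty with rfl | hDne
  · rw [bestNTermError_empty hn]
    positivity
  have hlim : Filter.Tendsto (fun γ : ℝ => γ * bestNTermError D n f) (nhdsWithin 1 (Set.Iio 1))
      (nhds (bestNTermError D n f)) := by
    simpa using ((continuous_mul_const (bestNTermError D n f)).tendsto 1).mono_left
      nhdsWithin_le_nhds
  refine le_of_tendsto hlim ?_
  filter_upwards [Ioo_mem_nhdsLT one_pos] with γ ⟨hγ0, hγ1⟩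
  obtain ⟨g, hg⟩ := exists_isWeakOrthogonalGreedy hDne hD hγ0.le hγ1 f
  have hgD (k : ℕ) : g k ∈ D := (hg k).1
  rw [div_mul_eq_mul_div, le_div_iff₀ (by positivity)]
  calc γ * bestNTermError D n f * √n
      ≤ γ * ‖spanResidual g n f‖ * √n := by
        gcongr
        exact bestNTermError_le_norm_spanResidual hgD f
    _ = γ * √n * ‖spanResidual g n f‖ := mul_right_comm _ _ _
    _ ≤ (∏ k ∈ Finset.range n, ‖gramSchmidt ℝ g k‖) ^ (n : ℝ)⁻¹ :=
        hg.mul_sqrt_mul_norm_spanResidual_le hγ0 hf n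
    _ ≤ (n.factorial * unitBallVol n * ε ^ n) ^ (n : ℝ)⁻¹ := by
        gcongr
        exact prod_norm_gramSchmidt_le_of_symConvexHull_subset hn hε hp hgD
    _ = (n.factorial * unitBallVol n) ^ (n : ℝ)⁻¹ * ε := by
        rw [Real.mul_rpow (by positivity) (by positivity), Real.pow_rpow_inv_natCast hε hn]

end Dictionary

lemma exists_cover_of_isBounded {X : Type*} [NormedAddCommGroup X] {K : Set X}
    (hK : Bornology.IsBounded K) (n : ℕ) :
    ∃ ε, 0 < ε ∧ ∃ c : Fin (2 ^ n) → X, K ⊆ ⋃ i, Metric.closedBall (c i) ε := by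
  obtain ⟨R, hR, hsub⟩ := hK.subset_closedBall_lt 0 0
  exact ⟨R, hR, fun _ => 0, hsub.trans (Set.subset_iUnion_of_subset 0 subset_rfl)⟩

theorem sup_bestNTermError_le_entropy_general {X : Type*} [NormedAddCommGroup X]
    [InnerProductSpace ℝ X] (D : Set X) (hD : Bornology.IsBounded (symConvexHull D)) (n : ℕ)
    (hn : 1 ≤ n) :
    sSup (bestNTermError D n '' symConvexHull D)
      ≤ ((n.factorial : ℝ) * unitBallVol n) ^ ((n : ℝ)⁻¹) / Real.sqrt n *
          entropyNumber n (symConvexHull D) := by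
  have hV := unitBallVol_pos n
  rw [← div_le_iff₀' (by positivity)]
  refine le_csInf (exists_cover_of_isBounded hD n) ?_
  rintro ε ⟨hε, p, hp⟩
  rw [div_le_iff₀' (by positivity)]
  refine Real.sSup_le (Set.forall_mem_image.mpr fun f hf => ?_) (by positivity)
  exact bestNTermError_le_of_symConvexHull_subset (hD.subset (subset_symConvexHull D))
    (Nat.one_le_iff_ne_zero.mp hn) hε.le hp hf

/-- uniform entropy-based bound for best `n`-term approximation over the
symmetric convex hull of the dictionary. -/
theorem sup_bestNTermError_le_entropy
    {X : Type*} [NormedAddCommGroup X] [InnerProductSpace ℝ X] [CompleteSpace X]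
    (D : Set X) (hD : IsCompact (symConvexHull D)) (n : ℕ) (hn : 1 ≤ n) :
    sSup (bestNTermError D n '' symConvexHull D)
      ≤ ((n.factorial : ℝ) * unitBallVol n) ^ ((n : ℝ)⁻¹) / Real.sqrt n *
          entropyNumber n (symConvexHull D) :=
  sup_bestNTermError_le_entropy_general D hD.isBounded n hn
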